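/- Let (t, n, b) be a smooth right-handed orthonormal frame on an open set U ⊆ ℝ³, let α be smooth and nowhere zero, μ smooth with ∂_s μ = Ω_n + μ Ω_nb + μ² Ω_b on U (so that J = α(n + μb) is a Poisson vector), let H be a smooth scalar function and v a smooth nowhere-zero vector field with v = J × ∇H and t = v/‖v‖. Then at every point of U: ∂_s ln(‖v‖/α) − n·(curl b) = μ Ω_b. -/

import Mathlib

/-!
Since `v · ∇H = 0`, the function `H` is constant along `t`, and `v = J × ∇H` gives `‖v‖ / α = g`
with `g = ∂_b H - μ ∂_n H`. Because `∂ₛ H = 0`, the derivatives of `∂_b H` and `∂_n H` along `t` are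
`[t, b] H` and `[t, n] H`. In an orthonormal frame Cartan's formula reads off the `n`- and
`b`-components of these brackets from `curl n` and `curl b`, whence
`∂ₛ g = (n · curl b + μ Ω_b) g - (∂ₛ μ - Ω_n - μ Ω_nb - μ² Ω_b) ∂_n H`.
The last term vanishes by the Riccati equation, and dividing by `g` gives the claim.
-/

noncomputable section

/-- Three-dimensional Euclidean space. -/
abbrev E3 : Type := EuclideanSpace ℝ (Fin 3)

/-- The Euclidean dot product on ℝ³. -/
def dot (u v : E3) : ℝ := ∑ i, u i * v i

/-- The cross product on ℝ³. -/
def cross (u v : E3) : E3 :=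
  (WithLp.equiv 2 (Fin 3 → ℝ)).symm
    ![u 1 * v 2 - u 2 * v 1, u 2 * v 0 - u 0 * v 2, u 0 * v 1 - u 1 * v 0]

/-- Partial derivative of a scalar function in the `i`-th coordinate direction. -/
def pd (i : Fin 3) (f : E3 → ℝ) (x : E3) : ℝ :=
  fderiv ℝ f x (EuclideanSpace.single i 1)

/-- The gradient ∇f of a scalar function. -/
def grad (f : E3 → ℝ) (x : E3) : E3 :=
  (WithLp.equiv 2 (Fin 3 → ℝ)).symm ![pd 0 f x, pd 1 f x, pd 2 f x]

/-- The curl ∇×F of a vector field. -/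
def curl (F : E3 → E3) (x : E3) : E3 :=
  (WithLp.equiv 2 (Fin 3 → ℝ)).symm
    ![pd 1 (fun y => F y 2) x - pd 2 (fun y => F y 1) x,
      pd 2 (fun y => F y 0) x - pd 0 (fun y => F y 2) x,
      pd 0 (fun y => F y 1) x - pd 1 (fun y => F y 0) x]

/-- Directional derivative ∂ₛ f = t·∇f of a scalar function along a vector field t. -/
def ds (t : E3 → E3) (f : E3 → ℝ) (x : E3) : ℝ := dot (t x) (grad f x)

/-- Componentwise directional derivative (u·∇)w of a vector field w along u. -/
def dirDeriv (u w : E3 → E3) (x : E3) : E3 :=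
  (WithLp.equiv 2 (Fin 3 → ℝ)).symm
    ![fderiv ℝ (fun y => w y 0) x (u x),
      fderiv ℝ (fun y => w y 1) x (u x),
      fderiv ℝ (fun y => w y 2) x (u x)]

/-- Helicity density w·(curl w) of a vector field. -/
def hel (w : E3 → E3) (x : E3) : ℝ := dot (w x) (curl w x)

/-- Cross-helicity sum n·(curl b) + b·(curl n). -/
def crossHel (n b : E3 → E3) (x : E3) : ℝ :=
  dot (n x) (curl b x) + dot (b x) (curl n x)

/-- A smooth right-handed orthonormal (Serret–Frenet type) frame on U. -/
def IsFrameOn (t n b : E3 → E3) (U : Set E3) : Prop :=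
  ContDiffOn ℝ (⊤ : ℕ∞) t U ∧ ContDiffOn ℝ (⊤ : ℕ∞) n U ∧ ContDiffOn ℝ (⊤ : ℕ∞) b U ∧
  ∀ x ∈ U, ‖t x‖ = 1 ∧ ‖n x‖ = 1 ∧ ‖b x‖ = 1 ∧
    dot (t x) (n x) = 0 ∧ dot (t x) (b x) = 0 ∧ dot (n x) (b x) = 0 ∧
    b x = cross (t x) (n x)

open VectorField
open scoped Topology

section VectorAlgebra

variable (u v w : E3)

theorem dot_eq_inner : dot u v = inner ℝ u v := by
  simp only [dot, PiLp.inner_apply, RCLike.inner_apply, conj_trivial, mul_comm]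

theorem dot_comm : dot u v = dot v u := by
  simp only [dot_eq_inner, real_inner_comm]

theorem dot_neg : dot u (-v) = -dot u v := by
  simp only [dot_eq_inner, inner_neg_right]

theorem dot_eq_dotProduct : dot u v = u.ofLp ⬝ᵥ v.ofLp := rfl

theorem cross_eq_crossProduct : cross u v = WithLp.toLp 2 (crossProduct u.ofLp v.ofLp) := rfl

theorem dot_cross_right_self : dot (cross u v) v = 0 := by
  rw [dot_comm, dot_eq_dotProduct, cross_eq_crossProduct, dot_cross_self]

theorem dot_cross_eq_dot_cross : dot u (cross v w) = dot (cross u v) w := by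
  rw [dot_comm (cross u v)]
  simp only [dot_eq_dotProduct, cross_eq_crossProduct, triple_product_permutation w.ofLp]

theorem cross_cross_eq_sub : cross u (cross v w) = dot u w • v - dot v u • w := by
  simp only [cross_eq_crossProduct, dot_eq_dotProduct, cross_cross_eq_smul_sub_smul',
    WithLp.toLp_sub, WithLp.toLp_smul, WithLp.toLp_ofLp]

theorem cross_smul_add_smul (a m : ℝ) :
    cross u (a • (v + m • w)) = a • (cross u v + m • cross u w) := by
  simp only [cross_eq_crossProduct, WithLp.ofLp_smul, WithLp.ofLp_add, map_smul, map_add,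
    WithLp.toLp_smul, WithLp.toLp_add]

end VectorAlgebra

theorem dot_self_eq_one {u : E3} (hu : ‖u‖ = 1) : dot u u = 1 := by
  rw [dot_eq_inner, real_inner_self_eq_norm_sq, hu, one_pow]

theorem dot_eq_zero_of_eq_cross {t v J h : E3} (hv : v = cross J h) (ht : t = ‖v‖⁻¹ • v) :
    dot t h = 0 := by
  rw [ht, dot_eq_inner, real_inner_smul_left, ← dot_eq_inner, hv, dot_cross_right_self, mul_zero]

section Derivatives

variable {f : E3 → ℝ} {F V W : E3 → E3} {x : E3}

theorem dot_grad (f : E3 → ℝ) (x w : E3) : dot w (grad f x) = fderiv ℝ f x w := by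
  conv_rhs => rw [← (EuclideanSpace.basisFun (Fin 3) ℝ).sum_repr w]
  simp [dot, grad, pd, Fin.sum_univ_three]

theorem ds_eq_fderiv (V : E3 → E3) (f : E3 → ℝ) (x : E3) : ds V f x = fderiv ℝ f x (V x) :=
  dot_grad f x (V x)

theorem ds_congr {g : E3 → ℝ} (V : E3 → E3) (h : f =ᶠ[𝓝 x] g) : ds V f x = ds V g x := by
  simp only [ds_eq_fderiv, h.fderiv_eq]

theorem ds_eq_zero_of_eventually_eq {c : ℝ} (V : E3 → E3) (h : ∀ᶠ y in 𝓝 x, f y = c) :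
    ds V f x = 0 := by
  rw [ds_congr V h, ds_eq_fderiv, fderiv_const_apply, zero_apply]

theorem ds_log (V : E3 → E3) (hf : DifferentiableAt ℝ f x) (h0 : f x ≠ 0) :
    ds V (fun y => Real.log (f y)) x = ds V f x / f x := by
  rw [ds_eq_fderiv, ds_eq_fderiv, fderiv.log hf h0, smul_apply, smul_eq_mul,
    inv_mul_eq_div]

theorem differentiableAt_ds (hf : ContDiffAt ℝ 2 f x) (hV : DifferentiableAt ℝ V x) :
    DifferentiableAt ℝ (ds V f) x := by
  have hdf : DifferentiableAt ℝ (fderiv ℝ f) x :=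
    (hf.fderiv_right (m := 1) (by norm_num)).differentiableAt one_ne_zero
  simpa only [funext (ds_eq_fderiv V f)] using hdf.clm_apply hV

theorem fderiv_lieBracket_eq_ds_sub_ds (hf : ContDiffAt ℝ 2 f x) (hV : DifferentiableAt ℝ V x)
    (hW : DifferentiableAt ℝ W x) :
    fderiv ℝ f x (lieBracket ℝ V W x) = ds V (ds W f) x - ds W (ds V f) x := by
  rw [fderiv_apply_lieBracket hf (by simp) hW hV]
  simp only [ds_eq_fderiv, funext (ds_eq_fderiv _ f)]

theorem dot_curl_cross (hF : DifferentiableAt ℝ F x) (u w : E3) :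
    dot (curl F x) (cross u w) = dot (fderiv ℝ F x u) w - dot (fderiv ℝ F x w) u := by
  have fderiv_coord (i : Fin 3) (z : E3) :
      fderiv ℝ F x z i = dot z (grad (fun y => F y i) x) := by
    rw [dot_grad]
    exact (congrArg (· z) (((EuclideanSpace.proj (𝕜 := ℝ) i).hasFDerivAt.comp x
      hF.hasFDerivAt).fderiv)).symm
  simp only [fderiv_coord, dot, grad, curl, cross, Fin.sum_univ_three, WithLp.equiv_symm_apply,
    Matrix.cons_val_zero, Matrix.cons_val_one, Matrix.cons_val]
  ring

/-- Cartan's formula `V ω(W) - W ω(V) = ω([V, W]) + dω(V, W)` for the 1-form `ω = F · dx`. -/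
theorem ds_dot_sub_ds_dot (hF : DifferentiableAt ℝ F x) (hV : DifferentiableAt ℝ V x)
    (hW : DifferentiableAt ℝ W x) :
    ds V (fun y => dot (F y) (W y)) x - ds W (fun y => dot (F y) (V y)) x
      = dot (F x) (lieBracket ℝ V W x) + dot (curl F x) (cross (V x) (W x)) := by
  rw [dot_curl_cross hF, lieBracket_eq]
  simp only [ds_eq_fderiv, dot_eq_inner, fderiv_inner_apply ℝ hF hV, fderiv_inner_apply ℝ hF hW,
    inner_sub_right]
  ring

theorem dot_lieBracket_of_dot_const {c d : ℝ} (hF : DifferentiableAt ℝ F x)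
    (hV : DifferentiableAt ℝ V x) (hW : DifferentiableAt ℝ W x)
    (hFV : ∀ᶠ y in 𝓝 x, dot (F y) (V y) = c) (hFW : ∀ᶠ y in 𝓝 x, dot (F y) (W y) = d) :
    dot (F x) (lieBracket ℝ V W x) = -dot (curl F x) (cross (V x) (W x)) := by
  have cartan := ds_dot_sub_ds_dot hF hV hW
  rw [ds_eq_zero_of_eventually_eq V hFW, ds_eq_zero_of_eventually_eq W hFV] at cartan
  linarith

end Derivatives

/-- Three vectors of ℝ³ forming a right-handed orthonormal frame: the pointwise condition in
`IsFrameOn`, with the scalar conditions bundled into Mathlib's `Orthonormal`. -/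
structure IsRightHandedFrame (t n b : E3) : Prop where
  orthonormal : Orthonormal ℝ ![t, n, b]
  eq_cross : b = cross t n

namespace IsRightHandedFrame

variable {t n b : E3}

theorem dot_t_t (h : IsRightHandedFrame t n b) : dot t t = 1 :=
  dot_self_eq_one (h.orthonormal.1 0)

theorem dot_n_n (h : IsRightHandedFrame t n b) : dot n n = 1 :=
  dot_self_eq_one (h.orthonormal.1 1)

theorem dot_b_b (h : IsRightHandedFrame t n b) : dot b b = 1 :=
  dot_self_eq_one (h.orthonormal.1 2)

theorem dot_n_t (h : IsRightHandedFrame t n b) : dot n t = 0 := by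
  simpa [dot_eq_inner] using h.orthonormal.2 (i := 1) (j := 0) (by decide)

theorem dot_b_t (h : IsRightHandedFrame t n b) : dot b t = 0 := by
  simpa [dot_eq_inner] using h.orthonormal.2 (i := 2) (j := 0) (by decide)

theorem dot_n_b (h : IsRightHandedFrame t n b) : dot n b = 0 := by
  simpa [dot_eq_inner] using h.orthonormal.2 (i := 1) (j := 2) (by decide)

theorem dot_b_n (h : IsRightHandedFrame t n b) : dot b n = 0 :=
  (dot_comm b n).trans h.dot_n_b

theorem cross_t_b (h : IsRightHandedFrame t n b) : cross t b = -n := by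
  rw [h.eq_cross, cross_cross_eq_sub, dot_comm t n, h.dot_n_t, h.dot_t_t, zero_smul, one_smul,
    zero_sub]

theorem eq_sum_dot_smul (h : IsRightHandedFrame t n b) (w : E3) :
    w = dot t w • t + dot n w • n + dot b w • b := by
  have span_eq_top : Submodule.span ℝ (Set.range ![t, n, b]) = ⊤ :=
    h.orthonormal.linearIndependent.span_eq_top_of_card_eq_finrank (by simp)
  have expansion := (OrthonormalBasis.mk h.orthonormal span_eq_top.ge).sum_repr' w
  simpa [Fin.sum_univ_three, dot_eq_inner] using expansion.symm

/-- `‖v‖ = t · (J × h) = (t × J) · h`, and `t × J = a (b - m n)`. -/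
theorem norm_eq_of_eq_cross (hf : IsRightHandedFrame t n b) {v h : E3} {a m : ℝ}
    (hv : v = cross (a • (n + m • b)) h) (ht : t = ‖v‖⁻¹ • v) :
    ‖v‖ = a * (dot b h - m * dot n h) := by
  have norm_eq_dot : ‖v‖ = dot t v := by
    rw [ht, dot_eq_inner, real_inner_smul_left, real_inner_self_eq_norm_mul_norm, ← mul_assoc,
      inv_mul_mul_self]
  have cross_J : cross t (a • (n + m • b)) = a • (b - m • n) := by
    rw [cross_smul_add_smul, ← hf.eq_cross, hf.cross_t_b, smul_neg, sub_eq_add_neg]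
  calc ‖v‖ = dot (a • (b - m • n)) h := by
        rw [norm_eq_dot, hv, dot_cross_eq_dot_cross, cross_J]
    _ = a * (dot b h - m * dot n h) := by
        simp only [dot_eq_inner, real_inner_smul_left, inner_sub_left]

end IsRightHandedFrame

/-- The vector fields `t, n, b` are differentiable at `x` and form a right-handed orthonormal frame
near `x`: a local version of `IsFrameOn` which asks only for the regularity at which `curl` and the
Lie bracket of the frame at `x` make sense. -/
structure IsFrameAt (t n b : E3 → E3) (x : E3) : Prop where
  differentiableAt_t : DifferentiableAt ℝ t x
  differentiableAt_n : DifferentiableAt ℝ n x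
  differentiableAt_b : DifferentiableAt ℝ b x
  eventually_frame : ∀ᶠ y in 𝓝 x, IsRightHandedFrame (t y) (n y) (b y)

theorem IsFrameOn.isFrameAt {t n b : E3 → E3} {U : Set E3} {x : E3} (h : IsFrameOn t n b U)
    (hU : U ∈ 𝓝 x) : IsFrameAt t n b x := by
  obtain ⟨ht, hn, hb, hframe⟩ := h
  refine ⟨(ht.contDiffAt hU).differentiableAt (by simp),
    (hn.contDiffAt hU).differentiableAt (by simp),
    (hb.contDiffAt hU).differentiableAt (by simp), ?_⟩
  filter_upwards [hU] with y hy
  obtain ⟨ht1, hn1, hb1, htn, htb, hnb, hcross⟩ := hframe y hy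
  rw [dot_eq_inner] at htn htb hnb
  refine ⟨⟨fun i => ?_, fun i j hij => ?_⟩, hcross⟩
  · fin_cases i <;> simpa
  · fin_cases i <;> fin_cases j <;> simp_all [real_inner_comm]

namespace IsFrameAt

variable {t n b : E3 → E3} {H μ : E3 → ℝ} {x : E3}

theorem dot_n_lieBracket_t_b (h : IsFrameAt t n b x) :
    dot (n x) (lieBracket ℝ t b x) = hel n x := by
  rw [dot_lieBracket_of_dot_const h.differentiableAt_n h.differentiableAt_t h.differentiableAt_b
      (h.eventually_frame.mono fun _ hy => hy.dot_n_t)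
      (h.eventually_frame.mono fun _ hy => hy.dot_n_b),
    h.eventually_frame.self_of_nhds.cross_t_b, dot_neg, neg_neg, dot_comm, hel]

theorem dot_b_lieBracket_t_b (h : IsFrameAt t n b x) :
    dot (b x) (lieBracket ℝ t b x) = dot (n x) (curl b x) := by
  rw [dot_lieBracket_of_dot_const h.differentiableAt_b h.differentiableAt_t h.differentiableAt_b
      (h.eventually_frame.mono fun _ hy => hy.dot_b_t)
      (h.eventually_frame.mono fun _ hy => hy.dot_b_b),
    h.eventually_frame.self_of_nhds.cross_t_b, dot_neg, neg_neg, dot_comm]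

theorem dot_n_lieBracket_t_n (h : IsFrameAt t n b x) :
    dot (n x) (lieBracket ℝ t n x) = -dot (b x) (curl n x) := by
  rw [dot_lieBracket_of_dot_const h.differentiableAt_n h.differentiableAt_t h.differentiableAt_n
      (h.eventually_frame.mono fun _ hy => hy.dot_n_t)
      (h.eventually_frame.mono fun _ hy => hy.dot_n_n),
    ← h.eventually_frame.self_of_nhds.eq_cross, dot_comm]

theorem dot_b_lieBracket_t_n (h : IsFrameAt t n b x) :
    dot (b x) (lieBracket ℝ t n x) = -hel b x := by
  rw [dot_lieBracket_of_dot_const h.differentiableAt_b h.differentiableAt_t h.differentiableAt_n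
      (h.eventually_frame.mono fun _ hy => hy.dot_b_t)
      (h.eventually_frame.mono fun _ hy => hy.dot_b_n),
    ← h.eventually_frame.self_of_nhds.eq_cross, dot_comm, hel]

theorem ds_ds_of_ds_eq_zero (h : IsFrameAt t n b x) (hH : ContDiffAt ℝ 2 H x)
    (hHt : ∀ᶠ y in 𝓝 x, ds t H y = 0) {W : E3 → E3} (hW : DifferentiableAt ℝ W x) :
    ds t (ds W H) x = dot (n x) (lieBracket ℝ t W x) * ds n H x
      + dot (b x) (lieBracket ℝ t W x) * ds b H x := by
  have bracket := fderiv_lieBracket_eq_ds_sub_ds hH h.differentiableAt_t hW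
  rw [ds_eq_zero_of_eventually_eq W hHt, sub_zero] at bracket
  rw [← bracket]
  conv_lhs => rw [h.eventually_frame.self_of_nhds.eq_sum_dot_smul (lieBracket ℝ t W x)]
  simp only [map_add, map_smul, smul_eq_mul, ← ds_eq_fderiv, hHt.self_of_nhds, mul_zero, zero_add]

theorem ds_ds_b_sub_mul_ds_n (h : IsFrameAt t n b x) (hH : ContDiffAt ℝ 2 H x)
    (hHt : ∀ᶠ y in 𝓝 x, ds t H y = 0) (hμ : DifferentiableAt ℝ μ x) :
    ds t (fun y => ds b H y - μ y * ds n H y) x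
      = (dot (n x) (curl b x) + μ x * hel b x) * (ds b H x - μ x * ds n H x)
        - (ds t μ x - (hel n x + μ x * crossHel n b x + μ x ^ 2 * hel b x)) * ds n H x := by
  have ds_ds_b : ds t (ds b H) x = hel n x * ds n H x + dot (n x) (curl b x) * ds b H x := by
    rw [h.ds_ds_of_ds_eq_zero hH hHt h.differentiableAt_b, h.dot_n_lieBracket_t_b,
      h.dot_b_lieBracket_t_b]
  have ds_ds_n : ds t (ds n H) x = -dot (b x) (curl n x) * ds n H x + -hel b x * ds b H x := by
    rw [h.ds_ds_of_ds_eq_zero hH hHt h.differentiableAt_n, h.dot_n_lieBracket_t_n,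
      h.dot_b_lieBracket_t_n]
  have hbH := differentiableAt_ds hH h.differentiableAt_b
  have hnH := differentiableAt_ds hH h.differentiableAt_n
  have leibniz : ds t (fun y => ds b H y - μ y * ds n H y) x
      = ds t (ds b H) x - (μ x * ds t (ds n H) x + ds n H x * ds t μ x) := by
    simp only [ds_eq_fderiv t, fderiv_fun_sub hbH (hμ.fun_mul hnH), fderiv_fun_mul hμ hnH,
      sub_apply, add_apply, smul_apply, smul_eq_mul]
  rw [leibniz, ds_ds_b, ds_ds_n, crossHel]
  ring

end IsFrameAt

theorem hamiltonian_implies_log_relation_general {t n b v : E3 → E3} {α μ H : E3 → ℝ} {x : E3}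
    (hframe : IsFrameAt t n b x) (hμ : DifferentiableAt ℝ μ x)
    (hric : ds t μ x = hel n x + μ x * crossHel n b x + μ x ^ 2 * hel b x)
    (hH : ContDiffAt ℝ 2 H x)
    (hham : ∀ᶠ y in 𝓝 x, v y = cross (α y • (n y + μ y • b y)) (grad H y))
    (ht : ∀ᶠ y in 𝓝 x, t y = ‖v y‖⁻¹ • v y) :
    ds t (fun y => Real.log (‖v y‖ / α y)) x - dot (n x) (curl b x) = μ x * hel b x := by
  set g : E3 → ℝ := fun y => ds b H y - μ y * ds n H y
  have norm_eq : ∀ᶠ y in 𝓝 x, ‖v y‖ = α y * g y := by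
    filter_upwards [hframe.eventually_frame, hham, ht] with y hfy hvy hty
    exact hfy.norm_eq_of_eq_cross hvy hty
  have norm_ne_zero : ∀ᶠ y in 𝓝 x, ‖v y‖ ≠ 0 := by
    filter_upwards [hframe.eventually_frame, ht] with y hfy hty hv0
    simpa [hty, hv0, dot] using hfy.dot_t_t
  have log_eq : (fun y => Real.log (‖v y‖ / α y)) =ᶠ[𝓝 x] fun y => Real.log (g y) := by
    filter_upwards [norm_eq, norm_ne_zero] with y hy hy0
    rw [hy, mul_div_cancel_left₀ _ (left_ne_zero_of_mul (hy ▸ hy0))]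
  have first_integral : ∀ᶠ y in 𝓝 x, ds t H y = 0 := by
    filter_upwards [hham, ht] with y hvy hty
    exact dot_eq_zero_of_eq_cross hvy hty
  have g_ne_zero : g x ≠ 0 :=
    right_ne_zero_of_mul (norm_eq.self_of_nhds ▸ norm_ne_zero.self_of_nhds)
  have differentiableAt_g : DifferentiableAt ℝ g x :=
    (differentiableAt_ds hH hframe.differentiableAt_b).fun_sub (hμ.fun_mul
      (differentiableAt_ds hH hframe.differentiableAt_n))
  rw [ds_congr t log_eq, ds_log t differentiableAt_g g_ne_zero,
    hframe.ds_ds_b_sub_mul_ds_n hH first_integral hμ, hric, sub_self, zero_mul, sub_zero,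
    mul_div_cancel_right₀ _ g_ne_zero, add_sub_cancel_left]

/-- for a Poisson vector J = α(n + μb) of a Hamiltonian structure,
∂ₛ ln(‖v‖/α) − n·(curl b) = μ Ωᵦ. -/
theorem hamiltonian_implies_log_relation
    (U : Set E3) (hU : IsOpen U) (t n b : E3 → E3)
    (hframe : IsFrameOn t n b U)
    (α μ : E3 → ℝ)
    (hα : ContDiffOn ℝ (⊤ : ℕ∞) α U) (hμ : ContDiffOn ℝ (⊤ : ℕ∞) μ U)
    (hα0 : ∀ x ∈ U, α x ≠ 0)
    (hric : ∀ x ∈ U, ds t μ x = hel n x + μ x * crossHel n b x + μ x ^ 2 * hel b x)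
    (H : E3 → ℝ) (hH : ContDiffOn ℝ (⊤ : ℕ∞) H U)
    (v : E3 → E3) (hv : ContDiffOn ℝ (⊤ : ℕ∞) v U) (hv0 : ∀ x ∈ U, v x ≠ 0)
    (hham : ∀ x ∈ U, v x = cross (α x • (n x + μ x • b x)) (grad H x))
    (ht : ∀ x ∈ U, t x = ‖v x‖⁻¹ • v x) :
    ∀ x ∈ U,
      ds t (fun y => Real.log (‖v y‖ / α y)) x - dot (n x) (curl b x)
        = μ x * hel b x := by
  intro x hx
  have hUx : U ∈ 𝓝 x := hU.mem_nhds hx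
  exact hamiltonian_implies_log_relation_general (hframe.isFrameAt hUx)
    ((hμ.contDiffAt hUx).differentiableAt (by simp)) (hric x hx)
    (mod_cast contDiffAt_infty.1 (hH.contDiffAt hUx) 2)
    (Filter.eventually_of_mem hUx hham) (Filter.eventually_of_mem hUx ht)
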